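/- Let f^N be a function in the velocity span, continuous on Ω̄, and let E^N : Ω_x → ℝ be bounded and measurable. Then ∫_Ω f^N(x,v)·R^N(x,v) dv dx = −(1/2)·∫_{Ω_x} E^N(x)·[ f^N(x,v_max)² − f^N(x,v_min)² ] dx. -/

import Mathlib

open MeasureTheory Real

/-! The sum `K(w, v) = ∑ n, φ n w * φ n v` is the reproducing kernel of the span of the orthonormal
family `φ`: integrating a function of the span against `K(w, ·)` evaluates it at `w`. For fixed `x`
the penalty term is a combination of `K(v_max, ·)` and `K(v_min, ·)`, so integrating it against
`f^N(x, ·)` produces the two boundary values of `f^N(x, ·)`, and the identity already holds for each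
`x` before integration in `x`. -/

lemma memLp_restrict_of_continuousOn_isCompact {X F : Type*} [TopologicalSpace X]
    [MeasurableSpace X] [OpensMeasurableSpace X] [NormedAddCommGroup F]
    {μ : Measure X} [IsFiniteMeasureOnCompacts μ] {K : Set X} {f : X → F} (hf : ContinuousOn f K)
    (hK : IsCompact K) (hKm : MeasurableSet K) (p : ENNReal) : MemLp f p (μ.restrict K) := by
  have : IsFiniteMeasure (μ.restrict K) := isFiniteMeasure_restrict.2 hK.measure_lt_top.ne
  obtain ⟨C, hC⟩ := hK.exists_bound_of_continuousOn hf
  exact .of_bound (hf.aestronglyMeasurable_of_isCompact hK hKm) C (ae_restrict_of_forall_mem hKm hC)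

/-- The `φ n` are orthonormal in `L²(ν)`, as functions rather than classes in `Lp ℝ 2 ν`,
because the penalty term evaluates them at points. -/
structure IsL2Orthonormal {V ι : Type*} [MeasurableSpace V] [DecidableEq ι] (φ : ι → V → ℝ)
    (ν : Measure V) : Prop where
  memLp : ∀ n, MemLp (φ n) 2 ν
  integral_mul : ∀ n m, ∫ v, φ n v * φ m v ∂ν = if n = m then 1 else 0

lemma isL2Orthonormal_restrict_of_continuousOn {V ι : Type*} [TopologicalSpace V]
    [MeasurableSpace V] [OpensMeasurableSpace V] [DecidableEq ι] {φ : ι → V → ℝ} {ν : Measure V}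
    [IsFiniteMeasureOnCompacts ν] {K t : Set V} (hK : IsCompact K) (hKm : MeasurableSet K)
    (htK : t ⊆ K) (hφ : ∀ n, ContinuousOn (φ n) K)
    (hortho : ∀ n m, ∫ v in t, φ n v * φ m v ∂ν = if n = m then 1 else 0) :
    IsL2Orthonormal φ (ν.restrict t) where
  memLp n := (memLp_restrict_of_continuousOn_isCompact (hφ n) hK hKm 2).mono_measure
    (Measure.restrict_mono_set ν htK)
  integral_mul := hortho

section SpanKernel

variable {V ι : Type*} [Fintype ι]

/-- `g` agrees on `s` with a real linear combination of the `φ n`. This is the velocity span at a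
fixed `x`; the values of `g` and `φ` off `s` are irrelevant. -/
def InSpanOn (φ : ι → V → ℝ) (s : Set V) (g : V → ℝ) : Prop :=
  ∃ c : ι → ℝ, ∀ v ∈ s, g v = ∑ n, c n * φ n v

/-- The reproducing kernel of the span of an orthonormal family `φ`. -/
def spanKernel (φ : ι → V → ℝ) (w v : V) : ℝ :=
  ∑ n, φ n w * φ n v

/-- The penalty term `R^N(x, ·)` at a fixed `x`, with `E = E^N(x)`, `g = f^N(x, ·)`, and the
endpoints `v_min`, `v_max` replaced by arbitrary points `a`, `b`. -/
noncomputable def penalty (φ : ι → V → ℝ) (a b : V) (E : ℝ) (g : V → ℝ) (v : V) : ℝ :=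
  -(1 / 2) * E * (g b * spanKernel φ b v - g a * spanKernel φ a v)

variable [MeasurableSpace V] {φ : ι → V → ℝ} {ν : Measure V} {s : Set V} {g : V → ℝ}

lemma InSpanOn.memLp {p : ENNReal} (hg : InSpanOn φ s g) (hφ : ∀ n, MemLp (φ n) p ν)
    (hs : ∀ᵐ v ∂ν, v ∈ s) : MemLp g p ν := by
  obtain ⟨c, hc⟩ := hg
  exact (memLp_finsetSum Finset.univ fun n _ ↦ (hφ n).const_mul (c n)).ae_eq
    (hs.mono fun v hv ↦ (hc v hv).symm)

lemma memLp_spanKernel {p : ENNReal} (hφ : ∀ n, MemLp (φ n) p ν) (w : V) :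
    MemLp (spanKernel φ w) p ν :=
  memLp_finsetSum Finset.univ fun n _ ↦ (hφ n).const_mul (φ n w)

variable [DecidableEq ι]

lemma IsL2Orthonormal.integral_sum_mul (hφ : IsL2Orthonormal φ ν) (c : ι → ℝ) (m : ι) :
    ∫ v, (∑ n, c n * φ n v) * φ m v ∂ν = c m := by
  have hint (n : ι) : Integrable (fun v ↦ c n * (φ n v * φ m v)) ν :=
    ((hφ.memLp n).integrable_mul (hφ.memLp m)).const_mul (c n)
  simp_rw [Finset.sum_mul, mul_assoc]
  rw [integral_finsetSum _ fun n _ ↦ hint n]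
  simp [integral_const_mul, hφ.integral_mul]

lemma InSpanOn.integral_mul_spanKernel (hg : InSpanOn φ s g) (hφ : IsL2Orthonormal φ ν)
    (hs : ∀ᵐ v ∂ν, v ∈ s) {w : V} (hw : w ∈ s) :
    ∫ v, g v * spanKernel φ w v ∂ν = g w := by
  have hgL2 : MemLp g 2 ν := hg.memLp hφ.memLp hs
  obtain ⟨c, hc⟩ := hg
  have hcoeff (n : ι) : ∫ v, g v * φ n v ∂ν = c n := by
    rw [← hφ.integral_sum_mul c n]
    exact integral_congr_ae (hs.mono fun v hv ↦ by simp only [hc v hv])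
  have hint (n : ι) : Integrable (fun v ↦ φ n w * (g v * φ n v)) ν :=
    (hgL2.integrable_mul (hφ.memLp n)).const_mul (φ n w)
  calc ∫ v, g v * spanKernel φ w v ∂ν
      = ∫ v, ∑ n, φ n w * (g v * φ n v) ∂ν := by
        simp only [spanKernel, Finset.mul_sum, mul_left_comm]
    _ = ∑ n, φ n w * ∫ v, g v * φ n v ∂ν := by
        rw [integral_finsetSum _ fun n _ ↦ hint n]
        simp only [integral_const_mul]
    _ = ∑ n, c n * φ n w := by simp only [hcoeff, mul_comm (c _)]
    _ = g w := (hc w hw).symm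

theorem stmt3_general {a b : V} (hφ : IsL2Orthonormal φ ν) (hs : ∀ᵐ v ∂ν, v ∈ s)
    (ha : a ∈ s) (hb : b ∈ s) (hg : InSpanOn φ s g) (E : ℝ) :
    ∫ v, g v * penalty φ a b E g v ∂ν = -(1 / 2) * (E * (g b ^ 2 - g a ^ 2)) := by
  have hint (w : V) : Integrable (fun v ↦ g w * (g v * spanKernel φ w v)) ν :=
    ((hg.memLp hφ.memLp hs).integrable_mul (memLp_spanKernel hφ.memLp w)).const_mul (g w)
  calc ∫ v, g v * penalty φ a b E g v ∂ν
      = ∫ v, -(1 / 2) * E *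
          (g b * (g v * spanKernel φ b v) - g a * (g v * spanKernel φ a v)) ∂ν := by
        congr with v
        rw [penalty]
        ring
    _ = -(1 / 2) * E * (g b * g b - g a * g a) := by
        rw [integral_const_mul, integral_sub (hint b) (hint a), integral_const_mul,
          integral_const_mul, hg.integral_mul_spanKernel hφ hs hb,
          hg.integral_mul_spanKernel hφ hs ha]
    _ = -(1 / 2) * (E * (g b ^ 2 - g a ^ 2)) := by ring

end SpanKernel

/-- For `f^N` in the velocity span (continuous on `Ω̄`) and `E^N`
bounded measurable, `∫_Ω f^N·R^N = −(1/2)∫_{Ω_x} E^N (f^N(·,v_max)² − f^N(·,v_min)²)`. -/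
theorem stmt3 (vmin vmax : ℝ) (hv : vmin < vmax)
    (NS : ℕ) (hNS : 1 ≤ NS) (φ : Fin NS → ℝ → ℝ)
    (hφc : ∀ n, ContinuousOn (φ n) (Set.Icc vmin vmax))
    (hortho : ∀ n m : Fin NS,
      (∫ v in Set.Ioo vmin vmax, φ n v * φ m v) = if n = m then (1 : ℝ) else 0)
    (fN : ℝ × ℝ → ℝ)
    (hfNc : ContinuousOn fN (Set.Icc (0 : ℝ) (2 * π) ×ˢ Set.Icc vmin vmax))
    (hfNspan : ∀ x ∈ Set.Ico (0 : ℝ) (2 * π), ∃ c : Fin NS → ℝ,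
      ∀ v ∈ Set.Icc vmin vmax, fN (x, v) = ∑ n, c n * φ n v)
    (EN : ℝ → ℝ) (hENm : Measurable EN)
    (hENb : ∃ C, ∀ x ∈ Set.Ico (0 : ℝ) (2 * π), |EN x| ≤ C)
    (RN : ℝ × ℝ → ℝ)
    (hRN : ∀ x v, RN (x, v) = -(1 / 2) * EN x *
      (fN (x, vmax) * (∑ n, φ n vmax * φ n v) - fN (x, vmin) * (∑ n, φ n vmin * φ n v))) :
    (∫ x in Set.Ioo (0 : ℝ) (2 * π), ∫ v in Set.Ioo vmin vmax, fN (x, v) * RN (x, v))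
      = -(1 / 2) * ∫ x in Set.Ioo (0 : ℝ) (2 * π),
          EN x * ((fN (x, vmax)) ^ 2 - (fN (x, vmin)) ^ 2) := by
  have hφ : IsL2Orthonormal φ (volume.restrict (Set.Ioo vmin vmax)) :=
    isL2Orthonormal_restrict_of_continuousOn isCompact_Icc measurableSet_Icc
      Set.Ioo_subset_Icc_self hφc hortho
  have hs : ∀ᵐ v ∂volume.restrict (Set.Ioo vmin vmax), v ∈ Set.Icc vmin vmax :=
    ae_restrict_of_forall_mem measurableSet_Ioo fun _ h ↦ Set.Ioo_subset_Icc_self h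
  simp_rw [hRN, ← integral_const_mul]
  exact setIntegral_congr_fun measurableSet_Ioo fun x hx ↦
    stmt3_general hφ hs (Set.left_mem_Icc.2 hv.le) (Set.right_mem_Icc.2 hv.le)
      (hfNspan x (Set.Ioo_subset_Ico_self hx)) (EN x)
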